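/- Let A ∈ G(Z,C) and z* ∈ C⁻ \ {0}. If A ⊕ H(z*) ∉ {Z, ∅}, then A −_{z*} A = H(z*); if A ⊕ H(z*) ∈ {Z, ∅}, then A −_{z*} A = Z. -/

import Mathlib

open Set Topology Pointwise

noncomputable section

variable {X Z : Type*}

/-- The family `G(Z,C)` of subsets `A` with `A = cl co (A + C)`. -/
def Gset [AddCommGroup Z] [Module ℝ Z] [TopologicalSpace Z] (C : Set Z) : Set (Set Z) :=
  {A | A = closure (convexHull ℝ (A + C))}

/-- `A ⊕ B = cl (A + B)` (Minkowski sum, with `A + ∅ = ∅`). -/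
def oplus [AddCommGroup Z] [TopologicalSpace Z] (A B : Set Z) : Set Z :=
  closure (A + B)

/-- The homogeneous closed half-space `H(z*) = {z : z*(z) ≤ 0}`. -/
def Hset [TopologicalSpace Z] [AddCommGroup Z] [Module ℝ Z] (zs : Z →L[ℝ] ℝ) : Set Z :=
  {z | zs z ≤ 0}

/-- `A −_{z*} B = {z : B + z ⊆ A ⊕ H(z*)}`. -/
def resid [TopologicalSpace Z] [AddCommGroup Z] [Module ℝ Z]
    (zs : Z →L[ℝ] ℝ) (A B : Set Z) : Set Z :=
  {z | ∀ b ∈ B, b + z ∈ oplus A (Hset zs)}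

/-- Convexity of a set-valued function: `f(t x₁ + (1-t) x₂) ⊇ t f(x₁) ⊕ (1-t) f(x₂)`. -/
def ConvexSV [AddCommGroup X] [Module ℝ X] [TopologicalSpace Z] [AddCommGroup Z] [Module ℝ Z]
    (f : X → Set Z) : Prop :=
  ∀ x₁ x₂ : X, ∀ t : ℝ, 0 < t → t < 1 →
    oplus (t • f x₁) ((1 - t) • f x₂) ⊆ f (t • x₁ + (1 - t) • x₂)

/-- Directional derivative `f'_{z*}(x₀, x) = ⋂_{s>0} cl ⋃_{0<t<s} (1/t)(f(x₀+tx) −_{z*} f(x₀))`. -/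
def dirDer [AddCommGroup X] [Module ℝ X] [TopologicalSpace Z] [AddCommGroup Z] [Module ℝ Z]
    (zs : Z →L[ℝ] ℝ) (f : X → Set Z) (x₀ x : X) : Set Z :=
  ⋂ s ∈ Ioi (0:ℝ), closure (⋃ t ∈ Ioo (0:ℝ) s, (1 / t) • resid zs (f (x₀ + t • x)) (f x₀))

/-- `S_{(x*,z*)}(x) = {z : x*(x) + z*(z) ≤ 0}`. -/
def Sfun [TopologicalSpace X] [AddCommGroup X] [Module ℝ X]
    [TopologicalSpace Z] [AddCommGroup Z] [Module ℝ Z]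
    (xs : X →L[ℝ] ℝ) (zs : Z →L[ℝ] ℝ) (x : X) : Set Z :=
  {z | xs x + zs z ≤ 0}

/-- The `z*`-subdifferential of `f` at `x₀`. -/
def subdiff [TopologicalSpace X] [AddCommGroup X] [Module ℝ X]
    [TopologicalSpace Z] [AddCommGroup Z] [Module ℝ Z]
    (zs : Z →L[ℝ] ℝ) (f : X → Set Z) (x₀ : X) : Set (X →L[ℝ] ℝ) :=
  {xs | ∀ x : X, dirDer zs f x₀ x ⊆ Sfun xs zs x}

/-- Scalarization `φ_{f,z*}(x) = inf{−z*(z) : z ∈ f(x)}` taking values in `EReal`. -/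
def scalFn [TopologicalSpace Z] [AddCommGroup Z] [Module ℝ Z]
    (zs : Z →L[ℝ] ℝ) (f : X → Set Z) (x : X) : EReal :=
  ⨅ z ∈ f x, ((-(zs z) : ℝ) : EReal)

/-- Inf-residuation on `EReal`: `r −• s = inf {t ∈ ℝ : r ≤ s + t}`. -/
def eresid (r s : EReal) : EReal :=
  sInf {t : EReal | ∃ t' : ℝ, t = (t' : EReal) ∧ r ≤ s + (t' : EReal)}

/-- Scalar directional derivative `φ'_{f,z*}(x₀,x) = inf_{t>0} (1/t)(φ(x₀+tx) −• φ(x₀))`. -/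
def scalDer [AddCommGroup X] [Module ℝ X] [TopologicalSpace Z] [AddCommGroup Z] [Module ℝ Z]
    (zs : Z →L[ℝ] ℝ) (f : X → Set Z) (x₀ x : X) : EReal :=
  ⨅ t ∈ Ioi (0:ℝ), (((1 / t : ℝ) : EReal) * eresid (scalFn zs f (x₀ + t • x)) (scalFn zs f x₀))

/-- Inf-translation `f̂(x; M) = cl co ⋃_{m ∈ M} f(m + x)`. -/
def infTrans [AddCommGroup X] [TopologicalSpace Z] [AddCommGroup Z] [Module ℝ Z]
    (f : X → Set Z) (M : Set X) (x : X) : Set Z :=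
  closure (convexHull ℝ (⋃ m ∈ M, f (m + x)))

end

theorem stmt2 {Z : Type*} [AddCommGroup Z] [Module ℝ Z] [TopologicalSpace Z]
    [IsTopologicalAddGroup Z] [ContinuousSMul ℝ Z] [LocallyConvexSpace ℝ Z]
    (C : Set Z) (hCconv : Convex ℝ C) (hC0 : (0:Z) ∈ C)
    (hCcone : ∀ t : ℝ, 0 < t → t • C ⊆ C) (hclC : closure C ≠ Set.univ)
    (zs : Z →L[ℝ] ℝ) (hzs : ∀ z ∈ C, zs z ≤ 0) (hzs0 : zs ≠ 0)
    (A : Set Z) (hA : A ∈ Gset C) :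
    ((oplus A (Hset zs) ≠ Set.univ ∧ oplus A (Hset zs) ≠ ∅) → resid zs A A = Hset zs) ∧
    ((oplus A (Hset zs) = Set.univ ∨ oplus A (Hset zs) = ∅) → resid zs A A = Set.univ) := by
  have hsub : A + Hset zs ⊆ oplus A (Hset zs) := subset_closure
  have h0 : (0:Z) ∈ Hset zs := by simp [Hset]
  refine ⟨?_, ?_⟩
  · rintro ⟨hu, hne⟩
    have hAne : A.Nonempty := by
      rw [Set.nonempty_iff_ne_empty]
      rintro rfl
      exact hne (by simp [oplus])
    have hb : BddAbove (zs '' A) := by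
      by_contra hb
      apply hu
      rw [Set.eq_univ_iff_forall]
      intro z
      rw [not_bddAbove_iff] at hb
      obtain ⟨_, ⟨a, ha, rfl⟩, hlt⟩ := hb (zs z)
      apply hsub
      refine Set.mem_add.2 ⟨a, ha, z - a, ?_, by abel⟩
      simp only [Hset, Set.mem_setOf_eq, map_sub]
      linarith
    have hle : oplus A (Hset zs) ⊆ {z | zs z ≤ sSup (zs '' A)} := by
      apply closure_minimal
      · rintro _ ⟨a, ha, h, hh, rfl⟩
        have h1 := le_csSup hb (Set.mem_image_of_mem zs ha)
        simp only [Hset, Set.mem_setOf_eq] at hh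
        simp only [Set.mem_setOf_eq, map_add]
        linarith
      · exact isClosed_le zs.continuous continuous_const
    ext z
    constructor
    · intro hz
      have h2 : sSup (zs '' A) ≤ sSup (zs '' A) - zs z := by
        apply csSup_le (hAne.image zs)
        rintro _ ⟨a, ha, rfl⟩
        have h3 := hle (hz a ha)
        simp only [Set.mem_setOf_eq, map_add] at h3
        linarith
      simp only [Hset, Set.mem_setOf_eq]
      linarith
    · intro hz b hb'
      exact hsub (Set.add_mem_add hb' hz)
  · rintro (h | h)
    · ext z
      simp [resid, h]
    · have hA0 : A = ∅ := by
        rw [Set.eq_empty_iff_forall_notMem]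
        intro a ha
        have := hsub (Set.add_mem_add ha h0)
        rw [h] at this
        exact this
      ext z
      simp [resid, hA0]
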